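/- arXiv:2001.02055 — 4 statements merged into one kernel-verified Lean document; each statement's English description precedes it below -/
import Mathlib

section
/- Let G be a finite abelian group, let K ≤ H ≤ G be subgroups with #K = K and #H = H, and let D ⊆ G be an H-relative difference set RDS(N,H,D,Λ) for G, where N = [G:H]. Then the quotient map π : G → G/K is injective on D, and the image π(D) is an (H/K)-relative difference set RDS(N, H/K, D, KΛ) for G/K. -/
/-- `𝒟` is an `H`-relative difference set with parameter `Λ` for the abelian group `G`:
no nonzero element of `H` is a difference of two members of `𝒟`, while every element
outside `H` is a difference of members of `𝒟` in exactly `Λ` ways. -/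
def IsRDS {G : Type*} [AddCommGroup G] (H : AddSubgroup G) (𝒟 : Set G) (Λ : ℕ) : Prop :=
  (∀ g ∈ H, g ≠ 0 →
    Nat.card {p : G × G // p.1 ∈ 𝒟 ∧ p.2 ∈ 𝒟 ∧ p.1 - p.2 = g} = 0) ∧
  (∀ g : G, g ∉ H →
    Nat.card {p : G × G // p.1 ∈ 𝒟 ∧ p.2 ∈ 𝒟 ∧ p.1 - p.2 = g} = Λ)

/-!
The first condition on a relative difference set says that its members lie in distinct cosets
of `H`. A homomorphism `f` with kernel inside `H` is therefore injective on `𝒟` and keeps the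
members in distinct cosets of `f(H)`. If `f` is moreover surjective and `f g ∉ f(H)`, then the
representations of `f g` as a difference in `f(𝒟)` are the images of the representations in `𝒟`
of the elements `g + k` with `k ∈ ker f`. None of these elements lies in `H`, so each of them has
`Λ` representations.
-/

open Function

theorem encard_iUnion_of_forall_encard_eq {ι α : Type*} {s : ι → Set α} {c : ℕ∞}
    (hdisj : Pairwise (Disjoint on s)) (hcard : ∀ i, (s i).encard = c) :
    (⋃ i, s i).encard = ENat.card ι * c := by
  rcases eq_or_ne c 0 with rfl | hc
  · have hempty : ∀ i, s i = ∅ := fun i => Set.encard_eq_zero.mp (hcard i)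
    simp [hempty]
  rcases finite_or_infinite ι with hι | hι
  · have := Fintype.ofFinite ι
    simp [Set.encard_iUnion_of_finite hdisj, finsum_eq_sum_of_fintype, hcard]
  · have hne : ∀ i, s i ≠ ∅ := fun i hi => hc (by rw [← hcard i, hi, Set.encard_empty])
    have hinj : Injective s := fun i j hij => by_contra fun hij' =>
      hne j (disjoint_self.mp (by simpa only [onFun, hij] using hdisj hij'))
    have hinf : (⋃ i, s i).Infinite := Set.infinite_iUnion hinj
    rw [hinf.encard_eq, ENat.card_eq_top_of_infinite, ENat.top_mul hc]

section DifferencePairs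

variable {G G' : Type*} [AddCommGroup G] [AddCommGroup G']

/-- The set of representations of `g` as a difference of two members of `𝒟`. -/
def differencePairs (𝒟 : Set G) (g : G) : Set (G × G) :=
  {p | p.1 ∈ 𝒟 ∧ p.2 ∈ 𝒟 ∧ p.1 - p.2 = g}

theorem pairwise_disjoint_differencePairs (𝒟 : Set G) :
    Pairwise (Disjoint on differencePairs 𝒟) := fun _ _ hne =>
  Set.disjoint_left.mpr fun _ hp hp' => hne (hp.2.2.symm.trans hp'.2.2)

theorem forall_differencePairs_eq_empty_iff_injOn_mk {H : AddSubgroup G} {𝒟 : Set G} :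
    (∀ g ∈ H, g ≠ 0 → differencePairs 𝒟 g = ∅) ↔ Set.InjOn ((↑) : G → G ⧸ H) 𝒟 := by
  constructor
  · intro hempty a ha b hb hab
    by_contra hne
    have hmem : (a, b) ∈ differencePairs 𝒟 (a - b) := ⟨ha, hb, rfl⟩
    rw [hempty _ (QuotientAddGroup.eq_iff_sub_mem.mp hab) (sub_ne_zero.mpr hne)] at hmem
    exact hmem
  · intro hinj g hg hg0
    refine Set.eq_empty_of_forall_notMem ?_
    rintro ⟨a, b⟩ ⟨ha, hb, rfl⟩
    exact hg0 (sub_eq_zero.mpr (hinj ha hb (QuotientAddGroup.eq_iff_sub_mem.mpr hg)))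

theorem map_mem_map_iff_of_ker_le {f : G →+ G'} {H : AddSubgroup G} (hker : f.ker ≤ H) {x : G} :
    f x ∈ H.map f ↔ x ∈ H := by
  rw [← AddSubgroup.mem_comap, AddSubgroup.comap_map_eq_self hker]

theorem injOn_of_injOn_mk_of_ker_le {f : G →+ G'} {H : AddSubgroup G} {𝒟 : Set G}
    (hker : f.ker ≤ H) (hinj : Set.InjOn ((↑) : G → G ⧸ H) 𝒟) : Set.InjOn f 𝒟 :=
  fun _ ha _ hb hab => hinj ha hb (QuotientAddGroup.eq_iff_sub_mem.mpr
    (hker (f.sub_mem_ker_iff.mpr hab)))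

theorem injOn_mk_image_of_ker_le {f : G →+ G'} {H : AddSubgroup G} {𝒟 : Set G}
    (hker : f.ker ≤ H) (hinj : Set.InjOn ((↑) : G → G ⧸ H) 𝒟) :
    Set.InjOn ((↑) : G' → G' ⧸ H.map f) (f '' 𝒟) := by
  rintro _ ⟨a, ha, rfl⟩ _ ⟨b, hb, rfl⟩ hab
  rw [QuotientAddGroup.eq_iff_sub_mem, ← map_sub, map_mem_map_iff_of_ker_le hker] at hab
  rw [hinj ha hb (QuotientAddGroup.eq_iff_sub_mem.mpr hab)]

theorem differencePairs_image (f : G →+ G') (𝒟 : Set G) (g : G) :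
    differencePairs (f '' 𝒟) (f g) =
      Prod.map f f '' ⋃ k : f.ker, differencePairs 𝒟 (g + k) := by
  ext ⟨u, v⟩
  constructor
  · rintro ⟨⟨a, ha, rfl⟩, ⟨b, hb, rfl⟩, hab⟩
    have hk : a - b - g ∈ f.ker := by
      rw [f.sub_mem_ker_iff, map_sub]
      exact hab
    exact ⟨(a, b), Set.mem_iUnion.mpr ⟨⟨_, hk⟩, ha, hb, (add_sub_cancel g (a - b)).symm⟩, rfl⟩
  · rintro ⟨⟨a, b⟩, hab, ⟨⟩⟩
    obtain ⟨k, ha, hb, hk⟩ := Set.mem_iUnion.mp hab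
    refine ⟨Set.mem_image_of_mem f ha, Set.mem_image_of_mem f hb, ?_⟩
    have hfk : f k = 0 := k.2
    simpa [hfk] using congrArg f hk

theorem encard_differencePairs_image {f : G →+ G'} {𝒟 : Set G} (hinj : Set.InjOn f 𝒟)
    {g : G} {Λ : ℕ∞} (hcard : ∀ k ∈ f.ker, (differencePairs 𝒟 (g + k)).encard = Λ) :
    (differencePairs (f '' 𝒟) (f g)).encard = ENat.card f.ker * Λ := by
  have hinj_pairs : Set.InjOn (Prod.map f f) (⋃ k : f.ker, differencePairs 𝒟 (g + k)) :=
    (hinj.prodMap hinj).mono (Set.iUnion_subset fun _ _ hp => Set.mk_mem_prod hp.1 hp.2.1)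
  have hdisj : Pairwise (Disjoint on fun k : f.ker => differencePairs 𝒟 (g + k)) :=
    (pairwise_disjoint_differencePairs 𝒟).comp_of_injective
      ((add_right_injective g).comp Subtype.val_injective)
  rw [differencePairs_image, hinj_pairs.encard_image]
  exact encard_iUnion_of_forall_encard_eq hdisj fun k => hcard k k.2

end DifferencePairs

/-- The version of `IsRDS` for groups of arbitrary cardinality. Representations are counted in
`ℕ∞`, because `Nat.card` does not distinguish an infinite set of representations from an empty
one. -/
structure IsRelativeDifferenceSet {G : Type*} [AddCommGroup G] (H : AddSubgroup G) (𝒟 : Set G)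
    (Λ : ℕ∞) : Prop where
  differencePairs_eq_empty : ∀ g ∈ H, g ≠ 0 → differencePairs 𝒟 g = ∅
  encard_differencePairs : ∀ g ∉ H, (differencePairs 𝒟 g).encard = Λ

theorem isRDS_iff_isRelativeDifferenceSet {G : Type*} [AddCommGroup G] [Finite G]
    {H : AddSubgroup G} {𝒟 : Set G} {Λ : ℕ} :
    IsRDS H 𝒟 Λ ↔ IsRelativeDifferenceSet H 𝒟 Λ := by
  have hcard : ∀ (g : G) (n : ℕ),
      Nat.card {p : G × G // p.1 ∈ 𝒟 ∧ p.2 ∈ 𝒟 ∧ p.1 - p.2 = g} = n ↔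
        (differencePairs 𝒟 g).encard = n := fun g n => by
    rw [← (Set.toFinite _).cast_ncard_eq, Nat.cast_inj]
    rfl
  simp only [IsRDS, hcard, Nat.cast_zero, Set.encard_eq_zero]
  exact ⟨fun h => ⟨h.1, h.2⟩, fun h => ⟨h.1, h.2⟩⟩

theorem stmt8_general {G G' : Type*} [AddCommGroup G] [AddCommGroup G'] {f : G →+ G'}
    (hf : Surjective f) {H : AddSubgroup G} (hker : f.ker ≤ H) {𝒟 : Set G} {Λ : ℕ∞}
    (h𝒟 : IsRelativeDifferenceSet H 𝒟 Λ) :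
    Set.InjOn f 𝒟 ∧ IsRelativeDifferenceSet (H.map f) (f '' 𝒟) (ENat.card f.ker * Λ) := by
  have hcosets : Set.InjOn ((↑) : G → G ⧸ H) 𝒟 :=
    forall_differencePairs_eq_empty_iff_injOn_mk.mp h𝒟.differencePairs_eq_empty
  have hinj : Set.InjOn f 𝒟 := injOn_of_injOn_mk_of_ker_le hker hcosets
  refine ⟨hinj, forall_differencePairs_eq_empty_iff_injOn_mk.mpr
    (injOn_mk_image_of_ker_le hker hcosets), hf.forall.mpr fun g hg => ?_⟩
  refine encard_differencePairs_image hinj fun k hk => h𝒟.encard_differencePairs _ ?_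
  rwa [H.add_mem_cancel_right (hker hk), ← map_mem_map_iff_of_ker_le hker]

/-- if `K ≤ H ≤ G` are subgroups of a finite abelian group and `𝒟` is an
`H`-`RDS(N,H,D,Λ)` for `G`, then the quotient map `π : G → G/K` is injective on `𝒟` and
`π(𝒟)` is an `(H/K)`-`RDS(N, H/K, D, KΛ)` for `G/K`. -/
theorem stmt8 {G : Type*} [AddCommGroup G] [Fintype G]
    (K H : AddSubgroup G) (hKH : K ≤ H)
    (𝒟 : Set G) (Kc Hc N D Λ : ℕ)
    (hKc : Kc = Nat.card K) (hHc : Hc = Nat.card H)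
    (hN : Fintype.card G = N * Hc) (hD : D = Nat.card 𝒟)
    (hRDS : IsRDS H 𝒟 Λ) :
    Set.InjOn (QuotientAddGroup.mk' K) 𝒟 ∧
    IsRDS (H.map (QuotientAddGroup.mk' K)) ((QuotientAddGroup.mk' K) '' 𝒟) (Kc * Λ) := by
  rw [isRDS_iff_isRelativeDifferenceSet] at hRDS ⊢
  simpa [hKc, ENat.card_eq_coe_natCard] using stmt8_general (QuotientAddGroup.mk'_surjective K)
    ((QuotientAddGroup.ker_mk' K).trans_le hKH) hRDS
end

section
/- Let Q be a prime power, J ≥ 2 an integer, F a finite field with Q^J elements, E ⊆ F its subfield with Q elements, and Tr : F → E the field trace. Let D = {x ∈ F^× : Tr(x) = 1}. Then #D = Q^{J−1}, and for every y ∈ F^×: #(D ∩ yD) = Q^{J−1} if y = 1, #(D ∩ yD) = 0 if y ∈ E^× and y ≠ 1, and #(D ∩ yD) = Q^{J−2} if y ∉ E^×. Consequently D is an E^×-relative difference set RDS((Q^J−1)/(Q−1), Q−1, Q^{J−1}, Q^{J−2}) for the multiplicative group F^×. -/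
open scoped BigOperators

/-- `𝒟` is an `H`-relative difference set with parameter `Λ` for the multiplicative
abelian group `G`: no element of `H \ {1}` is a "difference" (quotient) `d·d'⁻¹` of two
members of `𝒟`, while every element outside `H` is such a quotient in exactly `Λ` ways. -/
def IsRDSMul {G : Type*} [CommGroup G] (H : Subgroup G) (𝒟 : Set G) (Λ : ℕ) : Prop :=
  (∀ g ∈ H, g ≠ 1 →
    Nat.card {p : G × G // p.1 ∈ 𝒟 ∧ p.2 ∈ 𝒟 ∧ p.1 * p.2⁻¹ = g} = 0) ∧
  (∀ g : G, g ∉ H →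
    Nat.card {p : G × G // p.1 ∈ 𝒟 ∧ p.2 ∈ 𝒟 ∧ p.1 * p.2⁻¹ = g} = Λ)

/-- The subgroup `E^×` of `F^×` consisting of the units of `F` lying in the
subfield `E`. -/
def unitsOfSubfield {F : Type*} [Field F] (E : Subfield F) : Subgroup Fˣ where
  carrier := {u : Fˣ | (u : F) ∈ E}
  mul_mem' := fun {a b} ha hb => E.mul_mem ha hb
  one_mem' := E.one_mem
  inv_mem' := fun {a} ha => by
    simpa only [Set.mem_setOf_eq, Units.val_inv_eq_inv_val] using E.inv_mem ha

/-!
The trace form of a finite separable extension `L / K` is nondegenerate, so `K`-linearly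
independent `a i : L` give linearly independent functionals `x ↦ Tr (a i * x)`; hence the system
`Tr (a i * x) = c i` in `k` equations has `q ^ (n - k)` solutions, where `q = #K` and `n = [L : K]`.
The trace-one set `D` is the solution set for `a = (1)`, and `D ∩ yD` the one for `a = (1, y⁻¹)`,
which is linearly independent exactly when `y ∉ K`. If `y ∈ K`, then `Tr (y * d) = y * Tr d`
forces `y = 1` as soon as `D` meets `yD`.
-/

section LinearSystems

variable {K V : Type*} [Field K] [AddCommGroup V] [Module K V]

theorem surjective_pi_of_linearIndependent_dual {ι : Type*} [Finite ι]
    {φ : ι → Module.Dual K V} (hφ : LinearIndependent K φ) :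
    Function.Surjective (LinearMap.pi φ) := by
  have hφ_fun : LinearIndependent K fun i => (φ i : V → K) :=
    hφ.map' (LinearMap.ltoFun K V K K) (LinearMap.ker_eq_bot.2 DFunLike.coe_injective)
  rw [← LinearMap.range_eq_top, ← (LinearMap.range _).span_eq, LinearMap.coe_range]
  exact span_flip_eq_top_iff_linearIndependent.2 hφ_fun

theorem natCard_fiber_of_surjective [FiniteDimensional K V] {W : Type*} [AddCommGroup W]
    [Module K W] {f : V →ₗ[K] W} (hf : Function.Surjective f) (w : W) :
    Nat.card {x : V // f x = w} =
      Nat.card K ^ (Module.finrank K V - Module.finrank K W) := by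
  have hker : Module.finrank K f.ker = Module.finrank K V - Module.finrank K W := by
    rw [← f.finrank_range_add_finrank_ker, LinearMap.range_eq_top.2 hf, finrank_top,
      Nat.add_sub_cancel_left]
  calc Nat.card {x : V // f x = w}
      = Nat.card f.ker :=
        Nat.card_congr (AddMonoidHom.fiberEquivKerOfSurjective (f := f.toAddMonoidHom) hf w)
    _ = Nat.card K ^ (Module.finrank K V - Module.finrank K W) := by
        rw [Module.natCard_eq_pow_finrank (K := K), hker]

theorem natCard_trace_mul_eq {L ι : Type*} [Field L] [Algebra K L] [FiniteDimensional K L]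
    [Algebra.IsSeparable K L] [Fintype ι] {a : ι → L} (ha : LinearIndependent K a) (c : ι → K) :
    Nat.card {x : L // ∀ i, Algebra.trace K L (a i * x) = c i} =
      Nat.card K ^ (Module.finrank K L - Fintype.card ι) := by
  have htrace : LinearIndependent K fun i => Algebra.traceForm K L (a i) :=
    ha.map' (Algebra.traceForm K L) (traceForm_nondegenerate K L).ker_eq_bot
  rw [← Module.finrank_fintype_fun_eq_card K,
    ← natCard_fiber_of_surjective (surjective_pi_of_linearIndependent_dual htrace) c]
  exact Nat.card_congr (Equiv.subtypeEquivRight fun x => funext_iff.symm)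

end LinearSystems

theorem natCard_units_subtype {G₀ : Type*} [GroupWithZero G₀] {P : G₀ → Prop} (h0 : ¬ P 0) :
    Nat.card {u : G₀ˣ // P u} = Nat.card {x : G₀ // P x} := by
  refine Nat.card_congr (Equiv.ofBijective (fun u => ⟨u.1, u.2⟩) ⟨fun u v huv => ?_, ?_⟩)
  · exact Subtype.ext (Units.ext (congrArg Subtype.val huv))
  · rintro ⟨x, hx⟩
    have hx0 : x ≠ 0 := fun h => h0 (h ▸ hx)
    exact ⟨⟨Units.mk0 x hx0, hx⟩, rfl⟩

section RelativeDifferenceSets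

variable {G : Type*}

theorem natCard_mul_inv_eq [Group G] (D : Set G) (g : G) :
    Nat.card {p : G × G // p.1 ∈ D ∧ p.2 ∈ D ∧ p.1 * p.2⁻¹ = g} =
      Nat.card ↥(D ∩ (fun d => g * d) '' D) :=
  Nat.card_congr
    { toFun := fun p => ⟨p.1.1, p.2.1, p.1.2, p.2.2.1, by simp [← p.2.2.2]⟩
      invFun := fun x => ⟨(x.1, g⁻¹ * x.1), x.2.1, by simpa using x.2.2, by simp⟩
      left_inv := by rintro ⟨⟨a, b⟩, ha, hb, rfl⟩; simp
      right_inv := fun _ => rfl }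

theorem isRDSMul_iff_natCard_inter [CommGroup G] {H : Subgroup G} {D : Set G} {Λ : ℕ} :
    IsRDSMul H D Λ ↔
      (∀ g ∈ H, g ≠ 1 → Nat.card ↥(D ∩ (fun d => g * d) '' D) = 0) ∧
      ∀ g ∉ H, Nat.card ↥(D ∩ (fun d => g * d) '' D) = Λ := by
  simp only [IsRDSMul, natCard_mul_inv_eq]

end RelativeDifferenceSets

/-- The set of units of `L` of trace one over `K`, the relative difference set `𝒟` of the theorem.
The trace is the `K`-valued `Algebra.trace`; for finite fields `mem_traceOneUnits_iff_sum_pow`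
compares it with the `L`-valued power sum. -/
def traceOneUnits (K L : Type*) [Field K] [Field L] [Algebra K L] : Set Lˣ :=
  {u | Algebra.trace K L (u : L) = 1}

section TraceOneUnits

variable {K L : Type*} [Field K] [Field L] [Algebra K L]

theorem mem_traceOneUnits {u : Lˣ} :
    u ∈ traceOneUnits K L ↔ Algebra.trace K L (u : L) = 1 :=
  Iff.rfl

theorem mem_traceOneUnits_iff_sum_pow [Finite L] {u : Lˣ} :
    u ∈ traceOneUnits K L ↔
      ∑ j ∈ Finset.range (Module.finrank K L), (u : L) ^ Nat.card K ^ j = 1 := by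
  rw [← FiniteField.algebraMap_trace_eq_sum_pow, map_eq_one_iff _ (algebraMap K L).injective,
    mem_traceOneUnits]

theorem traceOneUnits_inter_mul_image (y : Lˣ) :
    traceOneUnits K L ∩ (fun d => y * d) '' traceOneUnits K L =
      {u : Lˣ | ∀ i, Algebra.trace K L (![1, (y : L)⁻¹] i * u) = 1} := by
  ext u
  simp [mem_traceOneUnits, Fin.forall_fin_two]

theorem traceOneUnits_inter_mul_image_eq_empty {y : Lˣ}
    (hy : (y : L) ∈ Set.range (algebraMap K L)) (hy1 : y ≠ 1) :
    traceOneUnits K L ∩ (fun d => y * d) '' traceOneUnits K L = ∅ := by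
  obtain ⟨c, hc⟩ := hy
  rw [Set.eq_empty_iff_forall_notMem]
  rintro _ ⟨hyd, d, hd, rfl⟩
  have hc1 : c = 1 :=
    calc c = c * Algebra.trace K L (d : L) := by rw [mem_traceOneUnits.1 hd, mul_one]
      _ = Algebra.trace K L ((y * d : Lˣ) : L) := by
        rw [Units.val_mul, ← hc, ← Algebra.smul_def, map_smul, smul_eq_mul]
      _ = 1 := hyd
  exact hy1 (Units.ext (by rw [← hc, hc1, map_one, Units.val_one]))

theorem linearIndependent_one_inv {y : L} (hy : y ∉ Set.range (algebraMap K L)) :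
    LinearIndependent K ![1, y⁻¹] := by
  rw [LinearIndependent.pair_iff' one_ne_zero]
  intro c hc
  exact hy ⟨c⁻¹, by rw [map_inv₀, Algebra.algebraMap_eq_smul_one, hc, inv_inv]⟩

variable [FiniteDimensional K L] [Algebra.IsSeparable K L]

theorem natCard_traceOneUnits :
    Nat.card (traceOneUnits K L) = Nat.card K ^ (Module.finrank K L - 1) := by
  have hone : LinearIndependent K fun _ : Unit => (1 : L) :=
    LinearIndependent.of_subsingleton () one_ne_zero
  have hcount := natCard_trace_mul_eq hone 1
  simp only [one_mul, Pi.one_apply, forall_const, Fintype.card_unit] at hcount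
  rw [← hcount]
  exact natCard_units_subtype (P := fun x : L => Algebra.trace K L x = 1) (by simp)

theorem natCard_traceOneUnits_inter_mul_image {y : Lˣ}
    (hy : (y : L) ∉ Set.range (algebraMap K L)) :
    Nat.card ↥(traceOneUnits K L ∩ (fun d => y * d) '' traceOneUnits K L) =
      Nat.card K ^ (Module.finrank K L - 2) := by
  rw [traceOneUnits_inter_mul_image, ← Fintype.card_fin 2,
    ← natCard_trace_mul_eq (linearIndependent_one_inv hy) 1]
  exact natCard_units_subtype
    (P := fun x : L => ∀ i, Algebra.trace K L (![1, (y : L)⁻¹] i * x) = 1) (by simp)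

end TraceOneUnits

/-- for a prime power `Q`, `J ≥ 2`, `F` the field with `Q^J` elements,
`E ⊆ F` its subfield with `Q` elements, `Tr` the field trace, and
`𝒟 = {x ∈ F^× : Tr x = 1}`, one has `#𝒟 = Q^{J−1}`, and
`#(𝒟 ∩ y𝒟) = Q^{J−1}` for `y = 1`, `= 0` for `y ∈ E^× \ {1}`, `= Q^{J−2}` for
`y ∉ E^×`; consequently `𝒟` is an `E^×`-`RDS((Q^J−1)/(Q−1), Q−1, Q^{J−1}, Q^{J−2})`
for `F^×`. -/
theorem stmt10 (Q J : ℕ) (hQ : IsPrimePow Q) (hJ : 2 ≤ J)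
    {F : Type*} [Field F] [Fintype F] (hF : Fintype.card F = Q ^ J)
    (E : Subfield F) (hE : Nat.card E = Q)
    (Tr : F → F) (hTr : ∀ x, Tr x = ∑ j ∈ Finset.range J, x ^ Q ^ j)
    (𝒟 : Set Fˣ) (h𝒟 : 𝒟 = {x : Fˣ | Tr (x : F) = 1}) :
    Nat.card 𝒟 = Q ^ (J - 1) ∧
    (∀ y : Fˣ, y = 1 →
      Nat.card ↥(𝒟 ∩ (fun d => y * d) '' 𝒟) = Q ^ (J - 1)) ∧
    (∀ y : Fˣ, (y : F) ∈ E → y ≠ 1 →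
      Nat.card ↥(𝒟 ∩ (fun d => y * d) '' 𝒟) = 0) ∧
    (∀ y : Fˣ, (y : F) ∉ E →
      Nat.card ↥(𝒟 ∩ (fun d => y * d) '' 𝒟) = Q ^ (J - 2)) ∧
    IsRDSMul (unitsOfSubfield E) 𝒟 (Q ^ (J - 2)) := by
  have hJ_finrank : Module.finrank E F = J := by
    have hcard := Module.natCard_eq_pow_finrank (K := E) (V := F)
    rw [Nat.card_eq_fintype_card, hF, hE] at hcard
    exact (Nat.pow_right_injective hQ.one_lt hcard).symm
  have h𝒟_trace : 𝒟 = traceOneUnits E F := by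
    ext u
    rw [h𝒟, mem_traceOneUnits_iff_sum_pow, hJ_finrank, hE, Set.mem_ofPred_eq, hTr]
  have hrange : Set.range (algebraMap E F) = E := Subtype.range_val
  have hcard : Nat.card 𝒟 = Q ^ (J - 1) := by
    rw [h𝒟_trace, natCard_traceOneUnits, hE, hJ_finrank]
  have hinter_mem (y : Fˣ) (hy : (y : F) ∈ E) (hy1 : y ≠ 1) :
      Nat.card ↥(𝒟 ∩ (fun d => y * d) '' 𝒟) = 0 := by
    rw [h𝒟_trace, traceOneUnits_inter_mul_image_eq_empty (hrange ▸ hy) hy1, Nat.card_of_isEmpty]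
  have hinter_notMem (y : Fˣ) (hy : (y : F) ∉ E) :
      Nat.card ↥(𝒟 ∩ (fun d => y * d) '' 𝒟) = Q ^ (J - 2) := by
    rw [h𝒟_trace, natCard_traceOneUnits_inter_mul_image (hrange ▸ hy), hE, hJ_finrank]
  refine ⟨hcard, ?_, hinter_mem, hinter_notMem,
    isRDSMul_iff_natCard_inter.2 ⟨hinter_mem, hinter_notMem⟩⟩
  rintro y rfl
  simpa using hcard
end

section
/- Let D₁ ≤ N₁ and D₂ ≤ N₂ be positive integers with N₁, N₂ ≥ 2 satisfying (N₁−D₁)(N₂−1) = (N₂−D₂)·D₁(N₁−1), and set D₃ = D₁D₂ and N₃ = N₁N₂. If (N₂−1) divides D₂(N₂−D₂) and D₃ divides (N₃−D₃)(N₃−1), then D₁ divides N₁. -/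
/-!
Write `N₁ / D₁ = a / b` in lowest terms; the goal is that `b` is a unit. The consistency condition
and `N₂ - 1 ∣ D₂ * (N₂ - D₂)` give `b ∣ N₂ - 1` and `b ∣ D₂`, so `b` is relatively prime to `N₂`,
to `N₂ - D₂` and to `a - b`. Cancelling these factors, `b ^ k ∣ N₂ - 1` passes successively to
`D₂`, to `N₁ * N₂ - 1` and to `N₁ - 1`; the extra factor `b` in the consistency condition
`(a - b) * (N₂ - 1) = (N₂ - D₂) * (b * (N₁ - 1))` then yields `b ^ (k + 1) ∣ N₂ - 1`. Hence every
power of `b` divides `N₂ - 1 ≠ 0`, which forces `b` to be a unit.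
-/

section CommRing

variable {R : Type*} [CommRing R]

theorem isRelPrime_of_dvd_sub_one {b x : R} (h : b ∣ x - 1) : IsRelPrime b x := by
  obtain ⟨c, hc⟩ := h
  exact IsCoprime.isRelPrime ⟨-c, 1, by linear_combination hc⟩

theorem isRelPrime_sub_self_right_iff {b a : R} : IsRelPrime b (a - b) ↔ IsRelPrime b a := by
  simpa only [mul_one] using IsRelPrime.sub_mul_left_right_iff (x := b) (y := a) (z := 1)

variable [DecompositionMonoid R]

theorem dvd_of_mul_eq_mul_of_dvd_mul [IsDomain R] {b c d x y z : R} (hbc : IsRelPrime b c)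
    (hx : x ≠ 0) (h : c * x = z * (b * y)) (hdvd : x ∣ d * z) : b ∣ d := by
  have hmul : x * (b * y) ∣ x * (c * d) := by
    calc x * (b * y) ∣ d * z * (b * y) := mul_dvd_mul_right hdvd _
      _ = x * (c * d) := by linear_combination -d * h
  have hby : b * y ∣ c * d := (mul_dvd_mul_iff_left hx).mp hmul
  exact hbc.dvd_of_dvd_mul_left (dvd_of_mul_right_dvd hby)

theorem pow_succ_dvd_sub_one_of_consistency {a b N₁ N₂ D₂ : R} (hba : IsRelPrime b a)
    (hbN₂ : b ∣ N₂ - 1) (hbD₂ : b ∣ D₂)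
    (hcons : (a - b) * (N₂ - 1) = (N₂ - D₂) * (b * (N₁ - 1)))
    (hdvd₁ : N₂ - 1 ∣ D₂ * (N₂ - D₂)) (hdvd₂ : D₂ ∣ a * N₂ * (N₁ * N₂ - 1))
    {k : ℕ} (hk : b ^ k ∣ N₂ - 1) : b ^ (k + 1) ∣ N₂ - 1 := by
  have hN₂ : IsRelPrime b N₂ := isRelPrime_of_dvd_sub_one hbN₂
  have hN₂D₂ : IsRelPrime b (N₂ - D₂) :=
    isRelPrime_of_dvd_sub_one (by simpa only [sub_right_comm] using dvd_sub hbN₂ hbD₂)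
  have hkD₂ : b ^ k ∣ D₂ := hN₂D₂.pow_left.dvd_of_dvd_mul_right (hk.trans hdvd₁)
  have hkN₁N₂ : b ^ k ∣ N₁ * N₂ - 1 :=
    (hba.mul_right hN₂).pow_left.dvd_of_dvd_mul_left (hkD₂.trans hdvd₂)
  have hkN₁ : b ^ k ∣ N₁ - 1 := by
    refine hN₂.pow_left.dvd_of_dvd_mul_right ?_
    convert dvd_sub hkN₁N₂ hk using 1
    ring
  refine (isRelPrime_sub_self_right_iff.mpr hba).pow_left.dvd_of_dvd_mul_left ?_
  rw [hcons, pow_succ']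
  exact (mul_dvd_mul_left b hkN₁).mul_left _

theorem isUnit_of_isRelPrime_of_consistency [IsDomain R] [WfDvdMonoid R] {a b N₁ N₂ D₂ : R}
    (hba : IsRelPrime b a) (hN₂ : N₂ ≠ 1)
    (hcons : (a - b) * (N₂ - 1) = (N₂ - D₂) * (b * (N₁ - 1)))
    (hdvd₁ : N₂ - 1 ∣ D₂ * (N₂ - D₂)) (hdvd₂ : D₂ ∣ a * N₂ * (N₁ * N₂ - 1)) :
    IsUnit b := by
  have hN₂' : N₂ - 1 ≠ 0 := sub_ne_zero.mpr hN₂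
  have hb_sub : IsRelPrime b (a - b) := isRelPrime_sub_self_right_iff.mpr hba
  have hbN₂ : b ∣ N₂ - 1 :=
    hb_sub.dvd_of_dvd_mul_left (hcons ▸ (dvd_mul_right b _).mul_left _)
  have hbD₂ : b ∣ D₂ := dvd_of_mul_eq_mul_of_dvd_mul hb_sub hN₂' hcons hdvd₁
  have hpow (k : ℕ) : b ^ k ∣ N₂ - 1 := by
    induction k with
    | zero => simp
    | succ k ih => exact pow_succ_dvd_sub_one_of_consistency hba hbN₂ hbD₂ hcons hdvd₁ hdvd₂ ih
  by_contra hb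
  obtain ⟨n, hn⟩ := FiniteMultiplicity.of_not_isUnit hb hN₂'
  exact hn (hpow (n + 1))

end CommRing

theorem stmt13_general {R : Type*} [CommRing R] [IsDomain R] [UniqueFactorizationMonoid R]
    {D₁ N₁ D₂ N₂ : R} (hN₂ : N₂ ≠ 1)
    (hcons : (N₁ - D₁) * (N₂ - 1) = (N₂ - D₂) * (D₁ * (N₁ - 1)))
    (hdvd₁ : N₂ - 1 ∣ D₂ * (N₂ - D₂))
    (hdvd₂ : D₁ * D₂ ∣ (N₁ * N₂ - D₁ * D₂) * (N₁ * N₂ - 1)) :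
    D₁ ∣ N₁ := by
  rcases eq_or_ne D₁ 0 with rfl | hD₁
  · have hN₁ : N₁ = 0 := by simpa [sub_ne_zero.mpr hN₂] using hcons
    exact hN₁ ▸ dvd_rfl
  obtain ⟨b, a, g, hba, rfl, rfl⟩ :=
    UniqueFactorizationMonoid.exists_reduced_factors D₁ hD₁ N₁
  have hg : g ≠ 0 := left_ne_zero_of_mul hD₁
  have hcons' : (a - b) * (N₂ - 1) = (N₂ - D₂) * (b * (g * a - 1)) :=
    mul_left_cancel₀ hg (by linear_combination hcons)
  have hdvd₂' : D₂ ∣ a * N₂ * (g * a * N₂ - 1) := by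
    have hbD₂ : b * D₂ ∣ (a * N₂ - b * D₂) * (g * a * N₂ - 1) := by
      refine (mul_dvd_mul_iff_left hg).mp ?_
      convert hdvd₂ using 1 <;> ring
    convert (dvd_of_mul_left_dvd hbD₂).add (dvd_mul_right D₂ (b * (g * a * N₂ - 1))) using 1
    ring
  have hb : IsUnit b := isUnit_of_isRelPrime_of_consistency hba hN₂ hcons' hdvd₁ hdvd₂'
  exact mul_dvd_mul_left g hb.dvd

/-- if `D₁ ≤ N₁`, `D₂ ≤ N₂` are positive integers with `N₁, N₂ ≥ 2`
satisfying `(N₁−D₁)(N₂−1) = (N₂−D₂)·D₁(N₁−1)` (i.e. the Welch-bound consistency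
condition), `D₃ = D₁D₂`, `N₃ = N₁N₂`, and if `(N₂−1) ∣ D₂(N₂−D₂)` and
`D₃ ∣ (N₃−D₃)(N₃−1)`, then `D₁ ∣ N₁`. -/
theorem stmt13 (D₁ N₁ D₂ N₂ : ℕ)
    (hD₁ : 0 < D₁) (h₁ : D₁ ≤ N₁) (hN₁ : 2 ≤ N₁)
    (hD₂ : 0 < D₂) (h₂ : D₂ ≤ N₂) (hN₂ : 2 ≤ N₂)
    (hcons : (N₁ - D₁) * (N₂ - 1) = (N₂ - D₂) * (D₁ * (N₁ - 1)))
    (hdvd₁ : (N₂ - 1) ∣ D₂ * (N₂ - D₂))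
    (hdvd₂ : (D₁ * D₂) ∣ (N₁ * N₂ - D₁ * D₂) * (N₁ * N₂ - 1)) :
    D₁ ∣ N₁ := by
  have hN₁_pos : 1 ≤ N₁ := by lia
  have hN₂_pos : 1 ≤ N₂ := by lia
  zify [h₁, h₂, hN₁_pos, hN₂_pos, Nat.mul_le_mul h₁ h₂, Nat.mul_le_mul hN₁_pos hN₂_pos]
    at hcons hdvd₁ hdvd₂ ⊢
  exact stmt13_general (by lia) hcons hdvd₁ hdvd₂
end

section
/- Let D < N < 2D be positive integers such that N−D divides D(N−1), let Q = D(N−1)/(N−D), and for an integer J ≥ 2 set D^{(J)} = D·Q^{J−1} and N^{(J)} = N·(Q^J−1)/(Q−1). Then: (1) N^{(J)} − D^{(J)} = D·N·(Q^{J−1}−1)/(Q−1) + (N−D); (2) D^{(J)}(N^{(J)}−1) = Q^J·(N^{(J)}−D^{(J)}); (3) D^{(J)}(N^{(J)}−D^{(J)}) = D²·Q^{J−2}·(N^{(J)}−1); (4) D^{(J)} does not divide (N^{(J)}−D^{(J)})(N^{(J)}−1); and (5) D^{(J)} + 1 < N^{(J)} < 2·D^{(J)}. -/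
/-!
Write `S n = 1 + Q + ⋯ + Q ^ (n - 1)` and `E = N - D`, so that `Q * E = D * (N - 1)`. Induction on
`n` gives `N * S (n + 1) = D * Q ^ n + A` with gap `A = D * N * S n + E`, and multiplying
`N * S (n + 1) = Q * (N * S n) + N` by `D` gives the key relation `D * (N * S (n + 1) - 1) = Q * A`,
of which (2) and (3) are multiples. If `D * Q` divided `A * (N * S (n + 1) - 1)`, the key relation
would give `D ^ 2 ∣ A ^ 2`, hence `D ∣ A` and `D ∣ E`, contrary to `0 < E < D`. Finally `N < Q`
makes `N * S n < Q ^ n`, which bounds the gap by `D * Q ^ n`.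
-/

open Finset

section CommSemiring

variable {R : Type*} [CommSemiring R] {D N E Q : R}

/-- The number `D⁽ᴶ⁾ = D·Q^{J−1}`, indexed by `n = J − 1` to avoid subtraction in the exponent. -/
def liftD (D Q : R) (n : ℕ) : R := D * Q ^ n

/-- The number `N⁽ᴶ⁾ = N·(Q^J−1)/(Q−1)`, indexed by `n = J − 1` as `liftD` is, with the quotient
written as a geometric sum so that no division occurs. -/
def liftN (N Q : R) (n : ℕ) : R := N * ∑ i ∈ range (n + 1), Q ^ i

theorem liftN_eq_liftD_add (hN : N = D + E) (hQ : Q * E + D = D * N) (n : ℕ) :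
    liftN N Q n = liftD D Q n + (D * N * ∑ i ∈ range n, Q ^ i + E) := by
  induction n with
  | zero => simp [liftN, liftD, hN]
  | succ n ih =>
    calc liftN N Q (n + 1)
        = liftN N Q n + N * Q ^ (n + 1) := by simp only [liftN, sum_range_succ _ (n + 1), mul_add]
      _ = D * Q ^ (n + 1) + (D * N * ∑ i ∈ range n, Q ^ i + E) + (Q * E + D) * Q ^ n := by
          rw [ih, liftD]
          nth_rw 2 [hN]
          ring
      _ = liftD D Q (n + 1) + (D * N * ∑ i ∈ range (n + 1), Q ^ i + E) := by
          rw [hQ, liftD, sum_range_succ]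
          ring

theorem mul_liftN_eq (hQ : Q * E + D = D * N) (n : ℕ) :
    D * liftN N Q n = Q * (D * N * ∑ i ∈ range n, Q ^ i + E) + D := by
  calc D * liftN N Q n
      = Q * (D * N * ∑ i ∈ range n, Q ^ i) + D * N := by
        rw [liftN, geom_sum_succ]
        ring
    _ = Q * (D * N * ∑ i ∈ range n, Q ^ i + E) + D := by
        rw [← hQ]
        ring

end CommSemiring

theorem dvd_of_mul_dvd_mul_of_mul_eq_mul {D Q A B : ℕ} (hQ : 0 < Q) (hAB : D * B = Q * A)
    (hdvd : D * Q ∣ A * B) : D ∣ A := by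
  have hsq : Q * D ^ 2 ∣ Q * A ^ 2 := by
    calc Q * D ^ 2 = D * (D * Q) := by ring
      _ ∣ D * (A * B) := mul_dvd_mul_left D hdvd
      _ = A * (D * B) := by ring
      _ = Q * A ^ 2 := by rw [hAB]; ring
  exact (Nat.pow_dvd_pow_iff two_ne_zero).1 (Nat.dvd_of_mul_dvd_mul_left hQ hsq)

theorem mul_geomSum_lt_pow {N Q : ℕ} (h : N < Q) (n : ℕ) :
    N * ∑ i ∈ range n, Q ^ i < Q ^ n := by
  induction n with
  | zero => simp
  | succ n ih =>
    calc N * ∑ i ∈ range (n + 1), Q ^ i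
        = N * ∑ i ∈ range n, Q ^ i + N * Q ^ n := by rw [sum_range_succ, mul_add]
      _ < Q ^ n + N * Q ^ n := by gcongr
      _ = (N + 1) * Q ^ n := by ring
      _ ≤ Q ^ (n + 1) := by rw [pow_succ']; gcongr; exact h

section NaturalNumbers

variable {D N Q : ℕ}

theorem liftN_sub_liftD (hDN : D ≤ N) (hQ : Q * (N - D) + D = D * N) (n : ℕ) :
    liftN N Q n - liftD D Q n = D * N * ∑ i ∈ range n, Q ^ i + (N - D) :=
  Nat.sub_eq_of_eq_add' (liftN_eq_liftD_add (Nat.add_sub_of_le hDN).symm hQ n)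

theorem mul_liftN_sub_one (hDN : D ≤ N) (hQ : Q * (N - D) + D = D * N) (n : ℕ) :
    D * (liftN N Q n - 1) = Q * (liftN N Q n - liftD D Q n) := by
  rw [Nat.mul_sub_one, liftN_sub_liftD hDN hQ, mul_liftN_eq hQ, Nat.add_sub_cancel]

theorem liftD_mul_liftN_sub_one (hDN : D ≤ N) (hQ : Q * (N - D) + D = D * N) (n : ℕ) :
    liftD D Q n * (liftN N Q n - 1) = Q ^ (n + 1) * (liftN N Q n - liftD D Q n) := by
  calc liftD D Q n * (liftN N Q n - 1)
      = Q ^ n * (D * (liftN N Q n - 1)) := by rw [liftD]; ring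
    _ = Q ^ (n + 1) * (liftN N Q n - liftD D Q n) := by rw [mul_liftN_sub_one hDN hQ]; ring

theorem liftD_mul_liftN_sub_liftD (hDN : D ≤ N) (hQ : Q * (N - D) + D = D * N) (n : ℕ) :
    liftD D Q (n + 1) * (liftN N Q (n + 1) - liftD D Q (n + 1)) =
      D ^ 2 * Q ^ n * (liftN N Q (n + 1) - 1) := by
  calc liftD D Q (n + 1) * (liftN N Q (n + 1) - liftD D Q (n + 1))
      = D * Q ^ n * (Q * (liftN N Q (n + 1) - liftD D Q (n + 1))) := by
        nth_rw 1 [liftD]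
        ring
    _ = D ^ 2 * Q ^ n * (liftN N Q (n + 1) - 1) := by rw [← mul_liftN_sub_one hDN hQ]; ring

theorem lt_of_mul_sub_add_eq (hDN : D < N) (hN2D : N < 2 * D) (hQ : Q * (N - D) + D = D * N) :
    N < Q := by
  by_contra! hQN
  have : D * N < D * N := by
    calc D * N = Q * (N - D) + D := hQ.symm
      _ < N * (N - D) + N := add_lt_add_of_le_of_lt (Nat.mul_le_mul_right _ hQN) hDN
      _ = (N - D + 1) * N := by ring
      _ ≤ D * N := by gcongr; lia
  exact this.false

theorem not_liftD_dvd (hDN : D < N) (hN2D : N < 2 * D) (hQ : Q * (N - D) + D = D * N) (n : ℕ) :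
    ¬ liftD D Q (n + 1) ∣
      (liftN N Q (n + 1) - liftD D Q (n + 1)) * (liftN N Q (n + 1) - 1) := by
  intro hdvd
  have hQpos : 0 < Q := Nat.zero_lt_of_lt (lt_of_mul_sub_add_eq hDN hN2D hQ)
  have hDQ : D * Q ∣ liftD D Q (n + 1) := mul_dvd_mul_left D (dvd_pow_self Q n.succ_ne_zero)
  have hgap : D ∣ liftN N Q (n + 1) - liftD D Q (n + 1) :=
    dvd_of_mul_dvd_mul_of_mul_eq_mul hQpos (mul_liftN_sub_one hDN.le hQ _) (hDQ.trans hdvd)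
  rw [liftN_sub_liftD hDN.le hQ, mul_assoc, Nat.dvd_add_right (Nat.dvd_mul_right _ _)] at hgap
  exact Nat.not_dvd_of_pos_of_lt (by lia) (by lia) hgap

theorem liftD_add_one_lt_liftN (hD : 0 < D) (hDN : D < N) (hQ : Q * (N - D) + D = D * N) (n : ℕ) :
    liftD D Q (n + 1) + 1 < liftN N Q (n + 1) := by
  rw [liftN_eq_liftD_add (Nat.add_sub_of_le hDN.le).symm hQ]
  have hsum : 0 < ∑ i ∈ range (n + 1), Q ^ i := by
    rw [geom_sum_succ]
    lia
  have hN : 0 < N := hD.trans hDN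
  have hpos : 0 < D * N * ∑ i ∈ range (n + 1), Q ^ i := by positivity
  lia

theorem liftN_lt_two_mul_liftD (hDN : D < N) (hN2D : N < 2 * D) (hQ : Q * (N - D) + D = D * N)
    (n : ℕ) : liftN N Q n < 2 * liftD D Q n := by
  have hgap : D * N * ∑ i ∈ range n, Q ^ i + (N - D) < liftD D Q n := by
    calc D * N * ∑ i ∈ range n, Q ^ i + (N - D)
        < D * N * ∑ i ∈ range n, Q ^ i + D := by lia
      _ = D * (N * ∑ i ∈ range n, Q ^ i + 1) := by ring
      _ ≤ liftD D Q n :=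
        Nat.mul_le_mul_left D (mul_geomSum_lt_pow (lt_of_mul_sub_add_eq hDN hN2D hQ) n)
  rw [liftN_eq_liftD_add (Nat.add_sub_of_le hDN.le).symm hQ]
  lia

end NaturalNumbers

/-- let `D < N < 2D` with `N−D ∣ D(N−1)`, `Q = D(N−1)/(N−D)`, `J ≥ 2`,
`D⁽ᴶ⁾ = D·Q^{J−1}` and `N⁽ᴶ⁾ = N·(Q^J−1)/(Q−1)`. Then
(1) `N⁽ᴶ⁾ − D⁽ᴶ⁾ = D·N·(Q^{J−1}−1)/(Q−1) + (N−D)`;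
(2) `D⁽ᴶ⁾(N⁽ᴶ⁾−1) = Q^J·(N⁽ᴶ⁾−D⁽ᴶ⁾)`;
(3) `D⁽ᴶ⁾(N⁽ᴶ⁾−D⁽ᴶ⁾) = D²·Q^{J−2}·(N⁽ᴶ⁾−1)`;
(4) `D⁽ᴶ⁾` does not divide `(N⁽ᴶ⁾−D⁽ᴶ⁾)(N⁽ᴶ⁾−1)`;
(5) `D⁽ᴶ⁾ + 1 < N⁽ᴶ⁾ < 2·D⁽ᴶ⁾`. -/
theorem stmt15 (D N Q J : ℕ) (h1 : D < N) (h2 : N < 2 * D)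
    (hdvd : (N - D) ∣ D * (N - 1)) (hQ : Q = D * (N - 1) / (N - D)) (hJ : 2 ≤ J)
    (DJ NJ : ℕ) (hDJ : DJ = D * Q ^ (J - 1))
    (hNJ : NJ = N * ((Q ^ J - 1) / (Q - 1))) :
    NJ - DJ = D * N * ((Q ^ (J - 1) - 1) / (Q - 1)) + (N - D) ∧
    DJ * (NJ - 1) = Q ^ J * (NJ - DJ) ∧
    DJ * (NJ - DJ) = D ^ 2 * Q ^ (J - 2) * (NJ - 1) ∧
    ¬ DJ ∣ (NJ - DJ) * (NJ - 1) ∧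
    DJ + 1 < NJ ∧ NJ < 2 * DJ := by
  obtain ⟨n, rfl⟩ := Nat.exists_eq_add_of_le' hJ
  have hrel : Q * (N - D) + D = D * N := by
    rw [hQ, Nat.div_mul_cancel hdvd, Nat.mul_sub_one]
    exact Nat.sub_add_cancel (Nat.le_mul_of_pos_right D (by lia))
  have hQ2 : 2 ≤ Q := by
    have := lt_of_mul_sub_add_eq h1 h2 hrel
    lia
  obtain rfl : DJ = liftD D Q (n + 1) := hDJ
  obtain rfl : NJ = liftN N Q (n + 1) := by rw [hNJ, liftN, Nat.geomSum_eq hQ2]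
  rw [← Nat.geomSum_eq hQ2]
  exact ⟨liftN_sub_liftD h1.le hrel (n + 1), liftD_mul_liftN_sub_one h1.le hrel (n + 1),
    liftD_mul_liftN_sub_liftD h1.le hrel n, not_liftD_dvd h1 h2 hrel n,
    liftD_add_one_lt_liftN (by lia) h1 hrel n, liftN_lt_two_mul_liftD h1 h2 hrel (n + 1)⟩
end
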